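/- Let K be any field, and let G_25 ⊆ S_8 be the subgroup of order 56 generated by σ_1 = (1,2)(3,4)(5,6)(7,8), σ_2 = (1,3)(2,4)(5,7)(6,8), κ = (1,5)(2,6)(3,7)(4,8), and θ = (2,3,7,4,5,6,8). Then the fixed field K(x_1,…,x_8)^{G_25} is K-rational. -/

import Mathlib

noncomputable section

/-- The rational function field `K(x_i : i ∈ I)` over `K`, realized as the fraction field
of the multivariate polynomial ring. -/
abbrev RFF (K : Type) [Field K] (I : Type) := FractionRing (MvPolynomial I K)

/-- The image of the variable `x_i` in the rational function field `K(x_i : i ∈ I)`. -/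
noncomputable def Xvar (K : Type) [Field K] (I : Type) (i : I) : RFF K I :=
  algebraMap (MvPolynomial I K) (RFF K I) (MvPolynomial.X i)

/-- Permutations of the variables as `K`-algebra automorphisms of the polynomial ring. -/
def renameHom (K : Type) [Field K] (I : Type) :
    Equiv.Perm I →* (MvPolynomial I K ≃ₐ[K] MvPolynomial I K) where
  toFun σ := MvPolynomial.renameEquiv K σ
  map_one' := MvPolynomial.renameEquiv_refl K
  map_mul' σ τ := (MvPolynomial.renameEquiv_trans K τ σ).symm

/-- The action of permutations of the variables on `K(x_i : i ∈ I)` by `K`-automorphisms,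
determined by `σ(x_i) = x_{σ(i)}`. -/
noncomputable def permHom (K : Type) [Field K] (I : Type) :
    Equiv.Perm I →* (RFF K I ≃ₐ[K] RFF K I) :=
  (IsFractionRing.fieldEquivOfAlgEquivHom K (RFF K I)).comp (renameHom K I)

/-- The fixed field `K(x_i : i ∈ I)^G` of a group `G` of permutations of the variables. -/
noncomputable def fixedSub (K : Type) [Field K] (I : Type) (G : Subgroup (Equiv.Perm I)) :
    IntermediateField K (RFF K I) :=
  IntermediateField.fixedField (G.map (permHom K I))

/-- An extension `L/K` is `K`-rational if it is purely transcendental over `K`, i.e. generated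
by finitely many algebraically independent elements. -/
def IsRatExt (K : Type) [Field K] (L : Type*) [Field L] [Algebra K L] : Prop :=
  ∃ (n : ℕ) (t : Fin n → L), AlgebraicIndependent K t ∧
    IntermediateField.adjoin K (Set.range t) = ⊤


/-! ### Generalities -/

lemma permHom_Xvar (K : Type) [Field K] (I : Type) (σ : Equiv.Perm I) (i : I) :
    permHom K I σ (Xvar K I i) = Xvar K I (σ i) := by
  simp [permHom, Xvar, renameHom, IsFractionRing.fieldEquivOfAlgEquivHom]

lemma algInd_Xvar (K : Type) [Field K] (I : Type) : AlgebraicIndependent K (Xvar K I) := by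
  have h := (MvPolynomial.algebraicIndependent_X I K).map' (f := IsScalarTower.toAlgHom K
    (MvPolynomial I K) (RFF K I)) (by
      simpa using IsFractionRing.injective (MvPolynomial I K) (RFF K I))
  exact h

lemma adjoin_Xvar (K : Type) [Field K] (I : Type) (E : IntermediateField K (RFF K I))
    (h : ∀ i, Xvar K I i ∈ E) : E = ⊤ := by
  have hp : ∀ p : MvPolynomial I K, algebraMap (MvPolynomial I K) (RFF K I) p ∈ E := by
    intro p
    induction p using MvPolynomial.induction_on with
    | C a =>
      have : algebraMap (MvPolynomial I K) (RFF K I) (MvPolynomial.C a)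
          = algebraMap K (RFF K I) a := by
        rw [IsScalarTower.algebraMap_apply K (MvPolynomial I K) (RFF K I)]; rfl
      rw [this]; exact E.algebraMap_mem a
    | add p q hp hq => rw [map_add]; exact E.add_mem hp hq
    | mul_X p i hp => rw [map_mul]; exact E.mul_mem hp (h i)
  rw [eq_top_iff]
  intro x _
  obtain ⟨a, b, hb, rfl⟩ := IsFractionRing.div_surjective (A := MvPolynomial I K) x
  exact E.div_mem (hp a) (hp b)

open IntermediateField.algebraAdjoinAdjoin in
lemma algInd_of_finite (K : Type) [Field K] (ι : Type) [Finite ι] (e : Cardinal.mk ι = 8)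
    (t : ι → RFF K (Fin 8))
    (h : FiniteDimensional (IntermediateField.adjoin K (Set.range t)) (RFF K (Fin 8))) :
    AlgebraicIndependent K t := by
  have h1 : Algebra.IsAlgebraic (IntermediateField.adjoin K (Set.range t)) (RFF K (Fin 8)) :=
    inferInstance
  have h2 : Algebra.IsAlgebraic (Algebra.adjoin K (Set.range t)) (RFF K (Fin 8)) :=
    (IsFractionRing.comap_isAlgebraic_iff (A := Algebra.adjoin K (Set.range t))
      (K := IntermediateField.adjoin K (Set.range t))).mpr h1
  refine (Algebra.IsAlgebraic.isTranscendenceBasis_of_le_trdeg_of_finite K t ?_).1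
  have := (algInd_Xvar K (Fin 8)).cardinalMk_le_trdeg
  simpa [e] using this

lemma perm_fix_closure (K : Type) [Field K] (S : Set (Equiv.Perm (Fin 8))) (x : RFF K (Fin 8))
    (h : ∀ g ∈ S, permHom K (Fin 8) g x = x) : x ∈ fixedSub K (Fin 8) (Subgroup.closure S) := by
  rw [fixedSub, IntermediateField.mem_fixedField_iff]
  rintro f ⟨g, hg, rfl⟩
  induction hg using Subgroup.closure_induction with
  | mem g hg => exact h g hg
  | one => simp
  | mul a b _ _ ha hb => rw [map_mul, AlgEquiv.mul_apply, hb, ha]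
  | inv a _ ha =>
    rw [map_inv]
    exact (AlgEquiv.symm_apply_eq _).mpr ha.symm

lemma permHom_injective (K : Type) [Field K] (I : Type) : Function.Injective (permHom K I) := by
  intro σ τ h
  ext i
  have := DFunLike.congr_fun h (Xvar K I i)
  rw [permHom_Xvar, permHom_Xvar] at this
  exact (algInd_Xvar K I).injective this

lemma isRat_of_le (K : Type) [Field K] (S : Set (Equiv.Perm (Fin 8)))
    (hc : 56 ≤ Nat.card (Subgroup.closure S)) (t : Fin 8 → RFF K (Fin 8))
    (ht : ∀ g ∈ S, ∀ i, permHom K (Fin 8) g (t i) = t i)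
    (hf : FiniteDimensional (IntermediateField.adjoin K (Set.range t)) (RFF K (Fin 8)))
    (hd : Module.finrank (IntermediateField.adjoin K (Set.range t)) (RFF K (Fin 8)) ≤ 56) :
    IsRatExt K ↥(fixedSub K (Fin 8) (Subgroup.closure S)) := by
  have hi := algInd_of_finite K (Fin 8) (by simp) t hf
  have hm : ∀ i, t i ∈ fixedSub K (Fin 8) (Subgroup.closure S) :=
    fun i => perm_fix_closure K S _ fun g hg => ht g hg i
  have hle : IntermediateField.adjoin K (Set.range t) ≤ fixedSub K (Fin 8) (Subgroup.closure S) := by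
    rw [IntermediateField.adjoin_le_iff]
    rintro _ ⟨i, rfl⟩
    exact hm i
  have heq : IntermediateField.adjoin K (Set.range t) = fixedSub K (Fin 8) (Subgroup.closure S) := by
    refine IntermediateField.eq_of_le_of_finrank_le' hle (hd.trans (hc.trans ?_))
    have : Finite ((Subgroup.closure S).map (permHom K (Fin 8))) :=
      Finite.of_equiv _ ((Subgroup.closure S).equivMapOfInjective _
        (permHom_injective K (Fin 8))).toEquiv
    have : Fintype ((Subgroup.closure S).map (permHom K (Fin 8))) := Fintype.ofFinite _
    have h2 := FixedPoints.finrank_eq_card ((Subgroup.closure S).map (permHom K (Fin 8)))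
      (RFF K (Fin 8))
    have h3 : Nat.card (Subgroup.closure S)
        = Nat.card ((Subgroup.closure S).map (permHom K (Fin 8))) :=
      Nat.card_congr ((Subgroup.closure S).equivMapOfInjective _
        (permHom_injective K (Fin 8))).toEquiv
    rw [h3, Nat.card_eq_fintype_card, ← h2]
    exact le_rfl
  refine ⟨8, fun i => ⟨t i, hm i⟩, ?_, ?_⟩
  · have : t = (fixedSub K (Fin 8) (Subgroup.closure S)).val ∘ fun i => ⟨t i, hm i⟩ := rfl
    rw [this] at hi
    exact hi.of_comp _
  · have : Set.range t = (fixedSub K (Fin 8) (Subgroup.closure S)).val ''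
        (Set.range fun i => (⟨t i, hm i⟩ : fixedSub K (Fin 8) (Subgroup.closure S))) := by
      rw [← Set.range_comp]; rfl
    rw [eq_top_iff]
    rintro ⟨x, hx⟩ -
    rw [← heq, this, ← IntermediateField.adjoin_map] at hx
    obtain ⟨y, hy, hxy⟩ := hx
    have : y = ⟨x, by rw [← heq, this, ← IntermediateField.adjoin_map]; exact ⟨y, hy, hxy⟩⟩ :=
      Subtype.ext hxy
    rw [← this]; exact hy

/-! ### Step 1: the elementary abelian subgroup of order 8 -/

lemma adjoin_simple_finrank_le {E F : Type*} [Field E] [Field F] [Algebra E F] (a : F) (n : ℕ)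
    (P : Polynomial E) (hP : P.Monic) (hn : P.natDegree ≤ n) (h : Polynomial.aeval a P = 0) :
    FiniteDimensional E (IntermediateField.adjoin E {a}) ∧
      Module.finrank E (IntermediateField.adjoin E {a}) ≤ n := by
  have hi : IsIntegral E a := ⟨P, hP, by rwa [← Polynomial.aeval_def]⟩
  refine ⟨IntermediateField.adjoin.finiteDimensional hi, ?_⟩
  rw [IntermediateField.adjoin.finrank hi]
  exact (Polynomial.natDegree_le_natDegree (minpoly.min E a hP h)).trans hn

lemma adjoin_quad {K F : Type*} [Field K] [Field F] [Algebra K F] (E : IntermediateField K F)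
    (a p : F) (hp : p ∈ E) (hq : a ^ 2 + p * a ∈ E) :
    FiniteDimensional E (IntermediateField.adjoin E {a}) ∧
      Module.finrank E (IntermediateField.adjoin E {a}) ≤ 2 := by
  refine adjoin_simple_finrank_le a 2 (Polynomial.X ^ 2 + (Polynomial.C (⟨p, hp⟩ : E) * Polynomial.X -
    Polynomial.C (⟨_, hq⟩ : E))) ?_ ?_ ?_
  · monicity!
  · compute_degree
  · have h1 : algebraMap E F ⟨p, hp⟩ = p := rfl
    have h2 : algebraMap E F ⟨_, hq⟩ = a ^ 2 + p * a := rfl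
    simp only [map_add, map_sub, map_mul, map_pow, Polynomial.aeval_X, Polynomial.aeval_C, h1, h2]
    ring

lemma finrank_three_quad {K F : Type*} [Field K] [Field F] [Algebra K F] (E : IntermediateField K F)
    (p a b c : F) (hp : p ∈ E) (ha : a ^ 2 + p * a ∈ E) (hb : b ^ 2 + p * b ∈ E)
    (hc : c ^ 2 + p * c ∈ E)
    (htop : ∀ M : IntermediateField K F, E ≤ M → a ∈ M → b ∈ M → c ∈ M → M = ⊤) :
    FiniteDimensional E F ∧ Module.finrank E F ≤ 8 := by
  obtain ⟨fa, da⟩ := adjoin_quad E a p hp ha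
  obtain ⟨fb, db⟩ := adjoin_quad E b p hp hb
  obtain ⟨fc, dc⟩ := adjoin_quad E c p hp hc
  set A := IntermediateField.adjoin E {a}
  set B := IntermediateField.adjoin E {b}
  set C := IntermediateField.adjoin E {c}
  have h1 : A ⊔ B ⊔ C = ⊤ := by
    have := htop ((A ⊔ B ⊔ C).restrictScalars K) ?_ ?_ ?_ ?_
    · rw [eq_top_iff]
      intro x _
      have hx : x ∈ (A ⊔ B ⊔ C).restrictScalars K := by rw [this]; trivial
      exact hx
    · intro x hx
      exact (A ⊔ B ⊔ C).algebraMap_mem ⟨x, hx⟩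
    · exact (le_sup_left.trans le_sup_left : A ≤ A ⊔ B ⊔ C)
        (IntermediateField.mem_adjoin_simple_self E a)
    · exact (le_sup_right.trans le_sup_left : B ≤ A ⊔ B ⊔ C)
        (IntermediateField.mem_adjoin_simple_self E b)
    · exact (le_sup_right : C ≤ A ⊔ B ⊔ C)
        (IntermediateField.mem_adjoin_simple_self E c)
  have hf : FiniteDimensional E (A ⊔ B ⊔ C : IntermediateField E F) := inferInstance
  have hd : Module.finrank E (A ⊔ B ⊔ C : IntermediateField E F) ≤ 8 :=
    calc _ ≤ _ := IntermediateField.finrank_sup_le (A ⊔ B) C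
      _ ≤ (Module.finrank E A * Module.finrank E B) * Module.finrank E C :=
        Nat.mul_le_mul_right _ (IntermediateField.finrank_sup_le A B)
      _ ≤ (2 * 2) * 2 := by gcongr
  rw [h1] at hf hd
  rw [IntermediateField.finrank_top'] at hd
  exact ⟨Module.Finite.of_surjective
    (IntermediateField.topEquiv (F := E) (E := F)).toLinearEquiv.toLinearMap
    (IntermediateField.topEquiv (F := E) (E := F)).surjective, hd⟩

/-- The eight variables, relabelled as `x₀` and `p i`, `i ∈ ℤ/7`, so that `θ` shifts `p`.
`IsTh` says that `f` acts as `θ`; `IsT1`, `IsT2`, `IsT4` that `f` acts as one of the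
three translations. -/
def IsTh {F : Type} (x : F) (p : ZMod 7 → F) (f : F → F) : Prop :=
  f x = x ∧ ∀ i, f (p i) = p (i + 1)

/-- `f` acts as the translation that exchanges `x` and `p j`. -/
def IsTr {F : Type} (x : F) (p : ZMod 7 → F) (j : ZMod 7) (f : F → F) : Prop :=
  f x = p j ∧ f (p j) = x ∧ f (p (j + 1)) = p (j + 3) ∧ f (p (j + 3)) = p (j + 1) ∧
    f (p (j + 4)) = p (j + 5) ∧ f (p (j + 5)) = p (j + 4) ∧ f (p (j + 2)) = p (j + 6) ∧
    f (p (j + 6)) = p (j + 2)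

/-- Result of the first step. -/
def Step1 (K F : Type) [Field K] [Field F] [Algebra K F] (x : F) (p : ZMod 7 → F) : Prop :=
  ∃ (s : F) (z : ZMod 7 → F),
    (∀ f : F →ₐ[K] F, IsTh x p f → f s = s ∧ ∀ i, f (z i) = z (i + 1)) ∧
    (∀ j, ∀ f : F →ₐ[K] F, IsTr x p j f → f s = s ∧ ∀ i, f (z i) = z i) ∧
    ∀ E : IntermediateField K F, s ∈ E → (∀ i, z i ∈ E) →
      FiniteDimensional E F ∧ Module.finrank E F ≤ 8

lemma sum_zmod7 {F : Type*} [AddCommMonoid F] (g : ZMod 7 → F) :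
    ∑ i, g i = g 0 + g 1 + g 2 + g 3 + g 4 + g 5 + g 6 := Fin.sum_univ_seven g

lemma zmod7_cases {P : ZMod 7 → Prop} (h0 : P 0) (h1 : P 1) (h2 : P 2) (h3 : P 3) (h4 : P 4)
    (h5 : P 5) (h6 : P 6) : ∀ i, P i := by
  intro i
  fin_cases i <;> assumption

lemma isTr_shift {F : Type} {x : F} {p : ZMod 7 → F} {j : ZMod 7} {f : F → F}
    (h : IsTr x p j f) : IsTr x (fun k => p (j + k)) 0 f := by
  simpa [IsTr] using h

lemma sum_tr {F : Type} [Field F] {x : F} {p : ZMod 7 → F} {j : ZMod 7} (f : F →+* F)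
    (h : IsTr x p j f) : f (x + ∑ i, p i) = x + ∑ i, p i := by
  have h' := isTr_shift h
  rw [← Equiv.sum_comp (Equiv.addLeft j) p]
  simp only [Equiv.coe_addLeft]
  obtain ⟨a0, a1, a2, a3, a4, a5, a6, a7⟩ := h'
  simp only [zero_add] at a0 a1 a2 a3 a4 a5 a6 a7
  rw [sum_zmod7]
  simp only [map_add, a0, a1, a2, a3, a4, a5, a6, a7]
  ring

lemma sum_th {F : Type} [Field F] {x : F} {p : ZMod 7 → F} (f : F →+* F)
    (h : IsTh x p f) : f (x + ∑ i, p i) = x + ∑ i, p i := by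
  rw [map_add, map_sum, h.1]
  simp only [h.2]
  exact congrArg (x + ·) (Equiv.sum_comp (Equiv.addRight (1 : ZMod 7)) p)

/-- The eigenfunctions of the translations. -/
def yfun {F : Type} [Field F] (x : F) (p : ZMod 7 → F) (i : ZMod 7) : F :=
  x + p (i + 1) + p (i + 2) + p (i + 4) - p i - p (i + 3) - p (i + 5) - p (i + 6)

lemma yfun_shift {F : Type} [Field F] (x : F) (p : ZMod 7 → F) (i j : ZMod 7) :
    yfun x (fun k => p (j + k)) i = yfun x p (j + i) := by
  simp only [yfun, ← add_assoc]

lemma yfun_list {F : Type} [Field F] (x : F) (p : ZMod 7 → F) :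
    yfun x p 0 = x + p 1 + p 2 + p 4 - p 0 - p 3 - p 5 - p 6 ∧
    yfun x p 1 = x + p 2 + p 3 + p 5 - p 1 - p 4 - p 6 - p 0 ∧
    yfun x p 2 = x + p 3 + p 4 + p 6 - p 2 - p 5 - p 0 - p 1 ∧
    yfun x p 3 = x + p 4 + p 5 + p 0 - p 3 - p 6 - p 1 - p 2 ∧
    yfun x p 4 = x + p 5 + p 6 + p 1 - p 4 - p 0 - p 2 - p 3 ∧
    yfun x p 5 = x + p 6 + p 0 + p 2 - p 5 - p 1 - p 3 - p 4 ∧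
    yfun x p 6 = x + p 0 + p 1 + p 3 - p 6 - p 2 - p 4 - p 5 :=
  ⟨rfl, rfl, rfl, rfl, rfl, rfl, rfl⟩

lemma yfun_tr {F : Type} [Field F] {x : F} {p : ZMod 7 → F} (f : F →+* F)
    (h : IsTr x p 0 f) :
    f (yfun x p 0) = - yfun x p 0 ∧ f (yfun x p 1) = - yfun x p 1 ∧
    f (yfun x p 2) = - yfun x p 2 ∧ f (yfun x p 3) = yfun x p 3 ∧
    f (yfun x p 4) = - yfun x p 4 ∧ f (yfun x p 5) = yfun x p 5 ∧
    f (yfun x p 6) = yfun x p 6 := by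
  obtain ⟨a0, a1, a2, a3, a4, a5, a6, a7⟩ := h
  simp only [zero_add] at a0 a1 a2 a3 a4 a5 a6 a7
  obtain ⟨h0, h1, h2, h3, h4, h5, h6⟩ := yfun_list x p
  rw [h0, h1, h2, h3, h4, h5, h6]
  simp only [map_add, map_sub, a0, a1, a2, a3, a4, a5, a6, a7]
  refine ⟨?_, ?_, ?_, ?_, ?_, ?_, ?_⟩ <;> ring

/-- The invariants of the translations. -/
def zodd {F : Type} [Field F] (x : F) (p : ZMod 7 → F) (i : ZMod 7) : F :=
  yfun x p (i + 2) * yfun x p (i + 3) / yfun x p i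

lemma zodd_list {F : Type} [Field F] (x : F) (p : ZMod 7 → F) :
    zodd x p 0 = yfun x p 2 * yfun x p 3 / yfun x p 0 ∧
    zodd x p 1 = yfun x p 3 * yfun x p 4 / yfun x p 1 ∧
    zodd x p 2 = yfun x p 4 * yfun x p 5 / yfun x p 2 ∧
    zodd x p 3 = yfun x p 5 * yfun x p 6 / yfun x p 3 ∧
    zodd x p 4 = yfun x p 6 * yfun x p 0 / yfun x p 4 ∧
    zodd x p 5 = yfun x p 0 * yfun x p 1 / yfun x p 5 ∧
    zodd x p 6 = yfun x p 1 * yfun x p 2 / yfun x p 6 :=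
  ⟨rfl, rfl, rfl, rfl, rfl, rfl, rfl⟩

lemma zodd_tr0 {F : Type} [Field F] {x : F} {p : ZMod 7 → F} (f : F →+* F)
    (h : IsTr x p 0 f) : ∀ i, f (zodd x p i) = zodd x p i := by
  obtain ⟨h0, h1, h2, h3, h4, h5, h6⟩ := yfun_tr f h
  obtain ⟨g0, g1, g2, g3, g4, g5, g6⟩ := zodd_list x p
  apply zmod7_cases
  · simp [g0, h2, h3, h0]
  · simp [g1, h3, h4, h1]
  · simp [g2, h4, h5, h2]
  · simp [g3, h5, h6, h3]
  · simp [g4, h6, h0, h4]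
  · simp [g5, h0, h1, h5]
  · simp [g6, h1, h2, h6]

lemma step1_odd (K F : Type) [Field K] [Field F] [Algebra K F] (x : F) (p : ZMod 7 → F)
    (h2 : (2 : F) ≠ 0)
    (hgen : ∀ M : IntermediateField K F, x ∈ M → (∀ i, p i ∈ M) → M = ⊤)
    (hne : ∀ i, yfun x p i ≠ 0) :
    Step1 K F x p := by
  refine ⟨x + ∑ i, p i, zodd x p, ?_, ?_, ?_⟩
  · intro f hf
    refine ⟨sum_th (f : F →+* F) hf, ?_⟩
    obtain ⟨h0, h1⟩ := hf
    intro i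
    have : ∀ i, f (yfun x p i) = yfun x p (i + 1) := by
      intro i
      simp only [yfun, map_add, map_sub, h0, h1]
      ring_nf
    simp only [zodd, map_div₀, map_mul, this]
    ring_nf
  · intro j f hf
    refine ⟨sum_tr (f : F →+* F) hf, fun i => ?_⟩
    have := zodd_tr0 (f : F →+* F) (isTr_shift hf) (i - j)
    simp only [zodd, yfun_shift, ← add_assoc, add_sub_cancel] at this
    exact this
  · intro E hsE hzE
    obtain ⟨g0, g1, g2, g3, g4, g5, g6⟩ := zodd_list x p
    obtain ⟨l0, l1, l2, l3, l4, l5, l6⟩ := yfun_list x p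
    have n0 := hne 0
    have n1 := hne 1
    have n2 := hne 2
    have n3 := hne 3
    have n4 := hne 4
    have n5 := hne 5
    have n6 := hne 6
    have e3 : yfun x p 3 = zodd x p 0 * yfun x p 0 / yfun x p 2 := by rw [g0]; field_simp
    have e4 : yfun x p 4 = zodd x p 1 * yfun x p 1 / yfun x p 3 := by rw [g1]; field_simp
    have e5 : yfun x p 5 = zodd x p 2 * yfun x p 2 / yfun x p 4 := by rw [g2]; field_simp
    have e6 : yfun x p 6 = zodd x p 3 * yfun x p 3 / yfun x p 5 := by rw [g3]; field_simp
    refine finrank_three_quad E 0 (yfun x p 0) (yfun x p 1) (yfun x p 2) E.zero_mem ?_ ?_ ?_ ?_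
    · have : yfun x p 0 ^ 2 + 0 * yfun x p 0
          = zodd x p 1 * zodd x p 4 * zodd x p 6 / zodd x p 0 := by
        rw [g0, g1, g4, g6]; field_simp; ring
      rw [this]
      exact E.div_mem (E.mul_mem (E.mul_mem (hzE _) (hzE _)) (hzE _)) (hzE _)
    · have : yfun x p 1 ^ 2 + 0 * yfun x p 1
          = zodd x p 2 * zodd x p 5 * zodd x p 0 / zodd x p 1 := by
        rw [g0, g1, g2, g5]; field_simp; ring
      rw [this]
      exact E.div_mem (E.mul_mem (E.mul_mem (hzE _) (hzE _)) (hzE _)) (hzE _)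
    · have : yfun x p 2 ^ 2 + 0 * yfun x p 2
          = zodd x p 3 * zodd x p 6 * zodd x p 1 / zodd x p 2 := by
        rw [g3, g1, g2, g6]; field_simp; ring
      rw [this]
      exact E.div_mem (E.mul_mem (E.mul_mem (hzE _) (hzE _)) (hzE _)) (hzE _)
    · intro M hM m0 m1 m2
      have m3 : yfun x p 3 ∈ M := by
        rw [e3]; exact M.div_mem (M.mul_mem (hM (hzE _)) m0) m2
      have m4 : yfun x p 4 ∈ M := by
        rw [e4]; exact M.div_mem (M.mul_mem (hM (hzE _)) m1) m3
      have m5 : yfun x p 5 ∈ M := by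
        rw [e5]; exact M.div_mem (M.mul_mem (hM (hzE _)) m2) m4
      have m6 : yfun x p 6 ∈ M := by
        rw [e6]; exact M.div_mem (M.mul_mem (hM (hzE _)) m3) m5
      have ms : x + ∑ i, p i ∈ M := hM hsE
      have h8 : (8 : F) ≠ 0 := by
        have : (8 : F) = 2 * (2 * 2) := by norm_num
        rw [this]; exact mul_ne_zero h2 (mul_ne_zero h2 h2)
      have m8 : (8 : F) ∈ M := ofNat_mem M 8
      have key : ∀ w : F, 8 * w ∈ M → w ∈ M := by
        intro w hw
        have : w = (8 * w) / 8 := by field_simp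
        rw [this]; exact M.div_mem hw m8
      have comb : ∀ a0 a1 a2 a3 a4 a5 a6 : ℤ, (x + ∑ i, p i) + a0 * yfun x p 0 + a1 * yfun x p 1
          + a2 * yfun x p 2 + a3 * yfun x p 3 + a4 * yfun x p 4 + a5 * yfun x p 5
          + a6 * yfun x p 6 ∈ M := by
        intro a0 a1 a2 a3 a4 a5 a6
        have hz : ∀ (a : ℤ) (w : F), w ∈ M → (a : F) * w ∈ M := fun a w hw =>
          M.mul_mem (intCast_mem M a) hw
        exact M.add_mem (M.add_mem (M.add_mem (M.add_mem (M.add_mem (M.add_mem (M.add_mem ms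
          (hz _ _ m0)) (hz _ _ m1)) (hz _ _ m2)) (hz _ _ m3)) (hz _ _ m4)) (hz _ _ m5)) (hz _ _ m6)
      apply hgen
      · apply key
        convert comb 1 1 1 1 1 1 1 using 1
        rw [l0, l1, l2, l3, l4, l5, l6, sum_zmod7]; push_cast; ring
      · apply zmod7_cases
        · apply key
          convert comb (-1) (-1) (-1) 1 (-1) 1 1 using 1
          rw [l0, l1, l2, l3, l4, l5, l6, sum_zmod7]; push_cast; ring
        · apply key
          convert comb 1 (-1) (-1) (-1) 1 (-1) 1 using 1
          rw [l0, l1, l2, l3, l4, l5, l6, sum_zmod7]; push_cast; ring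
        · apply key
          convert comb 1 1 (-1) (-1) (-1) 1 (-1) using 1
          rw [l0, l1, l2, l3, l4, l5, l6, sum_zmod7]; push_cast; ring
        · apply key
          convert comb (-1) 1 1 (-1) (-1) (-1) 1 using 1
          rw [l0, l1, l2, l3, l4, l5, l6, sum_zmod7]; push_cast; ring
        · apply key
          convert comb 1 (-1) 1 1 (-1) (-1) (-1) using 1
          rw [l0, l1, l2, l3, l4, l5, l6, sum_zmod7]; push_cast; ring
        · apply key
          convert comb (-1) 1 (-1) 1 1 (-1) (-1) using 1
          rw [l0, l1, l2, l3, l4, l5, l6, sum_zmod7]; push_cast; ring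
        · apply key
          convert comb (-1) (-1) 1 (-1) 1 1 (-1) using 1
          rw [l0, l1, l2, l3, l4, l5, l6, sum_zmod7]; push_cast; ring

/-! #### Characteristic two -/

/-- First moments. -/
def ufun {F : Type} [Field F] (p : ZMod 7 → F) (i : ZMod 7) : F :=
  p i + p (i + 3) + p (i + 5) + p (i + 6)

/-- Third central moments (characteristic two). -/
def ztwo {F : Type} [Field F] (x : F) (p : ZMod 7 → F) (i : ZMod 7) : F :=
  (x + ∑ k, p k) * p i + ufun p i * (p i + p (i + 1)) + ufun p (i + 1) * (p i + p (i + 5))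
    + ufun p (i + 2) * (p i + p (i + 6))

lemma ufun_list {F : Type} [Field F] (p : ZMod 7 → F) :
    ufun p 0 = p 0 + p 3 + p 5 + p 6 ∧ ufun p 1 = p 1 + p 4 + p 6 + p 0 ∧
    ufun p 2 = p 2 + p 5 + p 0 + p 1 ∧ ufun p 3 = p 3 + p 6 + p 1 + p 2 ∧
    ufun p 4 = p 4 + p 0 + p 2 + p 3 ∧ ufun p 5 = p 5 + p 1 + p 3 + p 4 ∧
    ufun p 6 = p 6 + p 2 + p 4 + p 5 :=
  ⟨rfl, rfl, rfl, rfl, rfl, rfl, rfl⟩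

lemma ztwo_list {F : Type} [Field F] (x : F) (p : ZMod 7 → F) (s : F) (hs : x + ∑ k, p k = s) :
    ztwo x p 0 = s * p 0 + ufun p 0 * (p 0 + p 1) + ufun p 1 * (p 0 + p 5) + ufun p 2 * (p 0 + p 6) ∧
    ztwo x p 1 = s * p 1 + ufun p 1 * (p 1 + p 2) + ufun p 2 * (p 1 + p 6) + ufun p 3 * (p 1 + p 0) ∧
    ztwo x p 2 = s * p 2 + ufun p 2 * (p 2 + p 3) + ufun p 3 * (p 2 + p 0) + ufun p 4 * (p 2 + p 1) ∧
    ztwo x p 3 = s * p 3 + ufun p 3 * (p 3 + p 4) + ufun p 4 * (p 3 + p 1) + ufun p 5 * (p 3 + p 2) ∧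
    ztwo x p 4 = s * p 4 + ufun p 4 * (p 4 + p 5) + ufun p 5 * (p 4 + p 2) + ufun p 6 * (p 4 + p 3) ∧
    ztwo x p 5 = s * p 5 + ufun p 5 * (p 5 + p 6) + ufun p 6 * (p 5 + p 3) + ufun p 0 * (p 5 + p 4) ∧
    ztwo x p 6 = s * p 6 + ufun p 6 * (p 6 + p 0) + ufun p 0 * (p 6 + p 4) + ufun p 1 * (p 6 + p 5) := by
  subst hs
  exact ⟨rfl, rfl, rfl, rfl, rfl, rfl, rfl⟩

set_option linter.unusedSimpArgs false in
lemma ztwo_tr0 {F : Type} [Field F] (h2 : (2 : F) = 0) {x : F} {p : ZMod 7 → F} (f : F →+* F)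
    (h : IsTr x p 0 f) : ∀ i, f (ztwo x p i) = ztwo x p i := by
  have hs : f (x + ∑ k, p k) = x + ∑ k, p k := sum_tr f h
  obtain ⟨a0, a1, a2, a3, a4, a5, a6, a7⟩ := h
  simp only [zero_add] at a0 a1 a2 a3 a4 a5 a6 a7
  obtain ⟨h0, h1, h2, h3, h4, h5, h6⟩ := ufun_list p
  have hs' : x + ∑ k, p k = x + p 0 + p 1 + p 2 + p 3 + p 4 + p 5 + p 6 := by
    rw [sum_zmod7]; ring
  obtain ⟨g0, g1, g2, g3, g4, g5, g6⟩ := ztwo_list x p _ hs'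
  rw [hs'] at hs
  have hc : CharP F 2 := CharTwo.of_one_ne_zero_of_two_eq_zero one_ne_zero ‹_›
  generalize p 0 = p0 at *
  generalize p 1 = p1 at *
  generalize p 2 = p2 at *
  generalize p 3 = p3 at *
  generalize p 4 = p4 at *
  generalize p 5 = p5 at *
  generalize p 6 = p6 at *
  apply zmod7_cases
  · rw [g0, map_add, map_add, map_add, map_mul, hs, h0, h1, h2]
    simp only [map_add, map_mul, a0, a1, a2, a3, a4, a5, a6, a7]
    grind
  · rw [g1, map_add, map_add, map_add, map_mul, hs, h1, h2, h3]
    simp only [map_add, map_mul, a0, a1, a2, a3, a4, a5, a6, a7]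
    grind
  · rw [g2, map_add, map_add, map_add, map_mul, hs, h2, h3, h4]
    simp only [map_add, map_mul, a0, a1, a2, a3, a4, a5, a6, a7]
    grind
  · rw [g3, map_add, map_add, map_add, map_mul, hs, h3, h4, h5]
    simp only [map_add, map_mul, a0, a1, a2, a3, a4, a5, a6, a7]
    grind
  · rw [g4, map_add, map_add, map_add, map_mul, hs, h4, h5, h6]
    simp only [map_add, map_mul, a0, a1, a2, a3, a4, a5, a6, a7]
    grind
  · rw [g5, map_add, map_add, map_add, map_mul, hs, h5, h6, h0]
    simp only [map_add, map_mul, a0, a1, a2, a3, a4, a5, a6, a7]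
    grind
  · rw [g6, map_add, map_add, map_add, map_mul, hs, h6, h0, h1]
    simp only [map_add, map_mul, a0, a1, a2, a3, a4, a5, a6, a7]
    grind

lemma ztwo_shift {F : Type} [Field F] (x : F) (p : ZMod 7 → F) (i j : ZMod 7) :
    ztwo x (fun k => p (j + k)) i = ztwo x p (j + i) := by
  have : ∑ k, p (j + k) = ∑ k, p k := Equiv.sum_comp (Equiv.addLeft j) p
  simp only [ztwo, ufun, ← add_assoc, this]

lemma step1_two (K F : Type) [Field K] [Field F] [Algebra K F] (x : F) (p : ZMod 7 → F)
    (h2 : (2 : F) = 0)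
    (hgen : ∀ M : IntermediateField K F, x ∈ M → (∀ i, p i ∈ M) → M = ⊤)
    (hne : x + ∑ i, p i ≠ 0) :
    Step1 K F x p := by
  refine ⟨x + ∑ i, p i, ztwo x p, ?_, ?_, ?_⟩
  · intro f hf
    have hs := sum_th (f : F →+* F) hf
    refine ⟨hs, ?_⟩
    obtain ⟨h0, h1⟩ := hf
    intro i
    have hs' : f (x + ∑ k, p k) = x + ∑ k, p k := hs
    have : ∀ i, f (ufun p i) = ufun p (i + 1) := by
      intro i
      simp only [ufun, map_add, h1]
      ring_nf
    simp only [ztwo]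
    rw [map_add, map_add, map_add, map_mul, map_mul, map_mul, map_mul, hs']
    simp only [map_add, h1, this]
    ring_nf
  · intro j f hf
    refine ⟨sum_tr (f : F →+* F) hf, fun i => ?_⟩
    have := ztwo_tr0 h2 (f : F →+* F) (isTr_shift hf) (i - j)
    simp only [ztwo_shift, add_sub_cancel] at this
    exact this
  · intro E hsE hzE
    have hc : CharP F 2 := CharTwo.of_one_ne_zero_of_two_eq_zero one_ne_zero ‹_›
    obtain ⟨l0, l1, l2, l3, l4, l5, l6⟩ := ufun_list p
    obtain ⟨s, hs⟩ : ∃ s, x + ∑ k, p k = s := ⟨_, rfl⟩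
    obtain ⟨g0, g1, g2, g3, g4, g5, g6⟩ := ztwo_list x p s hs
    rw [hs] at hsE hne
    have hs' : s = x + p 0 + p 1 + p 2 + p 3 + p 4 + p 5 + p 6 := by
      rw [← hs, sum_zmod7]; ring
    have q0 : ufun p 0 ^ 2 + s * ufun p 0 = ztwo x p 0 + ztwo x p 3 + ztwo x p 5 + ztwo x p 6 := by
      rw [g0, g3, g5, g6, l0, l1, l2, l3, l4, l5, l6, hs']
      grind
    have q1 : ufun p 1 ^ 2 + s * ufun p 1 = ztwo x p 0 + ztwo x p 1 + ztwo x p 4 + ztwo x p 6 := by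
      rw [g0, g1, g4, g6, l0, l1, l2, l3, l4, l5, l6, hs']
      grind
    have q2 : ufun p 2 ^ 2 + s * ufun p 2 = ztwo x p 0 + ztwo x p 1 + ztwo x p 2 + ztwo x p 5 := by
      rw [g0, g1, g2, g5, l0, l1, l2, l3, l4, l5, l6, hs']
      grind
    have r1 : s * (p 0 + p 6) + ufun p 0 * ufun p 1 = ztwo x p 0 + ztwo x p 6 := by
      rw [g0, g6, l0, l1, l2, l6, hs']
      grind
    have r2 : s * (p 0 + p 5) + ufun p 0 * ufun p 2 = ztwo x p 0 + ztwo x p 5 := by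
      rw [g0, g5, l0, l1, l2, l5, l6, hs']
      grind
    have r3 : s * (p 0 + p 1) + ufun p 1 * ufun p 2 = ztwo x p 0 + ztwo x p 1 := by
      rw [g0, g1, l0, l1, l2, l3, hs']
      grind
    refine finrank_three_quad E s (ufun p 0) (ufun p 1) (ufun p 2) hsE ?_ ?_ ?_ ?_
    · rw [q0]
      exact E.add_mem (E.add_mem (E.add_mem (hzE _) (hzE _)) (hzE _)) (hzE _)
    · rw [q1]
      exact E.add_mem (E.add_mem (E.add_mem (hzE _) (hzE _)) (hzE _)) (hzE _)
    · rw [q2]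
      exact E.add_mem (E.add_mem (E.add_mem (hzE _) (hzE _)) (hzE _)) (hzE _)
    · intro M hM m0 m1 m2
      have ms : s ∈ M := hM hsE
      have mz : ∀ i, ztwo x p i ∈ M := fun i => hM (hzE i)
      have key : ∀ w v c : F, s * w + v = c → v ∈ M → c ∈ M → w ∈ M := by
        intro w v c h hv hc
        have : w = (c - v) / s := by rw [← h]; field_simp; ring
        rw [this]; exact M.div_mem (M.sub_mem hc hv) ms
      have k1 := key _ _ _ r1 (M.mul_mem m0 m1) (M.add_mem (mz _) (mz _))
      have k2 := key _ _ _ r2 (M.mul_mem m0 m2) (M.add_mem (mz _) (mz _))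
      have k3 := key _ _ _ r3 (M.mul_mem m1 m2) (M.add_mem (mz _) (mz _))
      have n0 : p 0 ∈ M := by
        refine key (p 0) _ _ ?_ (M.add_mem (M.add_mem (M.mul_mem m0 k3)
          (M.mul_mem m1 k2)) (M.mul_mem m2 k1)) (mz 0)
        rw [g0]; ring
      have sub : ∀ a b : F, a + b ∈ M → a ∈ M → b ∈ M := by
        intro a b h1 h2
        have := M.sub_mem h1 h2
        rwa [add_sub_cancel_left] at this
      have n6 := sub _ _ k1 n0
      have n5 := sub _ _ k2 n0
      have n1 := sub _ _ k3 n0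
      have n3 : p 3 ∈ M := by
        refine sub (p 0 + p 5 + p 6) _ ?_ (M.add_mem (M.add_mem n0 n5) n6)
        convert m0 using 1
        rw [l0]; ring
      have n4 : p 4 ∈ M := by
        refine sub (p 1 + p 6 + p 0) _ ?_ (M.add_mem (M.add_mem n1 n6) n0)
        convert m1 using 1
        rw [l1]; ring
      have n2 : p 2 ∈ M := by
        refine sub (p 5 + p 0 + p 1) _ ?_ (M.add_mem (M.add_mem n5 n0) n1)
        convert m2 using 1
        rw [l2]; ring
      apply hgen M _ (zmod7_cases n0 n1 n2 n3 n4 n5 n6)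
      refine sub (p 0 + p 1 + p 2 + p 3 + p 4 + p 5 + p 6) _ ?_ (M.add_mem (M.add_mem (M.add_mem
        (M.add_mem (M.add_mem (M.add_mem n0 n1) n2) n3) n4) n5) n6)
      convert ms using 1
      rw [hs']; ring

/-! ### Step 2: the cyclic group of order 7 -/

/-- Seven invariants of the cyclic shift of seven variables, generating a subfield of index `≤ 7`. -/
def Step2 (K F : Type*) [Field K] [Field F] [Algebra K F] (z : ZMod 7 → F) : Prop :=
  ∃ t : ZMod 7 → F,
    (∀ f : F →ₐ[K] F, (∀ i, f (z i) = z (i + 1)) → ∀ i, f (t i) = t i) ∧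
    (∀ f : F →ₐ[K] F, (∀ i, f (z i) = z i) → ∀ i, f (t i) = t i) ∧
    ∀ E : IntermediateField K F, (∀ i, t i ∈ E) →
      FiniteDimensional E (IntermediateField.adjoin E (Set.range z)) ∧
      Module.finrank E (IntermediateField.adjoin E (Set.range z)) ≤ 7

lemma sum_shift7 {M : Type*} [AddCommMonoid M] (g : ZMod 7 → M) : ∑ i, g (i + 1) = ∑ i, g i :=
  Equiv.sum_comp (Equiv.addRight (1 : ZMod 7)) g

lemma step2_seven (K F : Type*) [Field K] [Field F] [Algebra K F] (z : ZMod 7 → F)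
    (h7 : (7 : F) = 0) (hS : ∑ i, z i ≠ 0) : Step2 K F z := by
  have : Fact (Nat.Prime 7) := ⟨by norm_num⟩
  have : CharP F 7 := by
    refine ringChar.of_eq ?_
    have hd : ringChar F ∣ 7 := ringChar.dvd (by exact_mod_cast h7)
    rcases (Nat.dvd_prime (by norm_num)).1 hd with h | h
    · exact absurd h CharP.ringChar_ne_one
    · exact h
  obtain ⟨c, -⟩ : ∃ c : ZMod 7 →+* F, c = ZMod.castHom dvd_rfl F := ⟨_, rfl⟩
  have hc : ∀ (f : F →ₐ[K] F) i, f (c i) = c i := fun f i =>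
    RingHom.congr_fun (Subsingleton.elim ((f : F →+* F).comp c) c) i
  set S := ∑ i, z i with hSd
  set m := (∑ i, c i * z i) / S with hm
  let μ : ℕ → F := fun k => ∑ i, (c i - m) ^ k * z i
  have h0 : μ 0 = S := by simp [μ, hSd]
  have hmS : ∑ i, c i * z i = m * S := by rw [hm]; field_simp
  have h1 : μ 1 = 0 := by
    simp only [μ, pow_one, sub_mul, Finset.sum_sub_distrib, hmS, ← Finset.mul_sum]
    simp [hSd]
  refine ⟨fun i => if i = 1 then m ^ 7 - m else μ i.val, ?_, ?_, ?_⟩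
  · intro f hf i
    have fS : f S = S := by rw [hSd, map_sum]; simp only [hf]; exact sum_shift7 z
    have fm : f m = m - 1 := by
      have : f (∑ i, c i * z i) = ∑ i, c i * z i - S := by
        rw [map_sum, hSd, ← Finset.sum_sub_distrib, ← sum_shift7 (fun i => c i * z i - z i)]
        refine Finset.sum_congr rfl fun i _ => ?_
        rw [map_mul, hc, hf, map_add, map_one]; ring
      rw [hm, map_div₀, this, fS]; field_simp
    have fμ : ∀ k, f (μ k) = μ k := by
      intro k
      simp only [μ]
      rw [map_sum, ← sum_shift7 (fun i => (c i - m) ^ k * z i)]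
      refine Finset.sum_congr rfl fun i _ => ?_
      rw [map_mul, map_pow, map_sub, hc, hf, fm, map_add, map_one]; ring
    dsimp only
    split_ifs
    · rw [map_sub, map_pow, fm, sub_pow_char]; ring
    · exact fμ _
  · intro f hf i
    have fS : f S = S := by rw [hSd, map_sum]; simp only [hf]
    have fm : f m = m := by
      rw [hm, map_div₀, fS, map_sum]; simp only [map_mul, hc, hf]
    dsimp only
    split_ifs
    · rw [map_sub, map_pow, fm]
    · simp only [μ, map_sum, map_mul, map_pow, map_sub, hc, hf, fm]
  · intro E hE
    have ht : m ^ 7 - m ∈ E := by simpa using hE 1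
    have hμ : ∀ k, k < 7 → μ k ∈ E := by
      intro k hk
      by_cases h : k = 1
      · rw [h, h1]; exact E.zero_mem
      · have := hE (k : ZMod 7)
        have hv : ((k : ZMod 7)).val = k := ZMod.val_cast_of_lt hk
        dsimp only at this
        rw [if_neg, hv] at this
        · exact this
        · intro h'; rw [h'] at hv; exact h hv.symm
    obtain ⟨fd, dd⟩ := adjoin_simple_finrank_le (E := E) m 7
      (Polynomial.X ^ 7 - (Polynomial.X + Polynomial.C (⟨_, ht⟩ : E))) (by monicity!)
      (by compute_degree) (by
        have h2 : algebraMap E F ⟨_, ht⟩ = m ^ 7 - m := rfl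
        simp only [map_add, map_sub, map_pow, Polynomial.aeval_X, Polynomial.aeval_C, h2]
        ring)
    have hle : IntermediateField.adjoin E (Set.range z) ≤ IntermediateField.adjoin E {m} := by
      rw [IntermediateField.adjoin_le_iff]
      rintro _ ⟨j, rfl⟩
      set A := IntermediateField.adjoin E {m}
      have mA : m ∈ A := IntermediateField.mem_adjoin_simple_self E m
      have hEA : ∀ e ∈ E, e ∈ A := fun e he => A.algebraMap_mem ⟨e, he⟩
      have hcE : ∀ i : ZMod 7, c i ∈ E := by
        intro i
        have : c i = ((i.val : ℕ) : F) := by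
          rw [← map_natCast c, ZMod.natCast_zmod_val]
        rw [this]; exact natCast_mem E _
      have key : z j = S - ∑ k ∈ Finset.range 7, μ k * (m - c j) ^ (6 - k) * (Nat.choose 6 k) := by
        have e1 : ∀ i, (c i - c j) ^ 6 = ∑ k ∈ Finset.range 7,
            (c i - m) ^ k * (m - c j) ^ (6 - k) * (Nat.choose 6 k) := by
          intro i
          rw [← add_pow]; congr 1; ring
        have e2 : z j = ∑ i, (1 - (c i - c j) ^ 6) * z i := by
          rw [Finset.sum_eq_single j]
          · simp
          · intro i _ hij
            rw [← map_sub, ← map_pow, ZMod.pow_card_sub_one_eq_one (p := 7) (sub_ne_zero.2 hij)]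
            simp
          · simp
        rw [e2]
        simp only [sub_mul, one_mul, Finset.sum_sub_distrib, e1]
        congr 1
        simp only [μ, Finset.sum_mul]
        rw [Finset.sum_comm]
        refine Finset.sum_congr rfl fun k _ => Finset.sum_congr rfl fun i _ => by ring
      show z j ∈ A
      rw [key]
      refine A.sub_mem (hEA _ (h0 ▸ hμ 0 (by norm_num))) (A.sum_mem fun k hk => ?_)
      refine A.mul_mem (A.mul_mem (hEA _ (hμ k (Finset.mem_range.1 hk))) ?_) (natCast_mem A _)
      exact pow_mem (A.sub_mem mA (hEA _ (hcE j))) _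
    refine ⟨?_, (IntermediateField.finrank_le_of_le_right hle).trans dd⟩
    exact Module.Finite.of_injective (IntermediateField.inclusion hle).toLinearMap
      (IntermediateField.inclusion_injective hle)

/-- The dilation by `k` on the group algebra of `ℤ/7`. -/
def dil (R : Type*) [Field R] (k : ZMod 7) : AddMonoidAlgebra R (ZMod 7) →+* AddMonoidAlgebra R (ZMod 7) :=
  AddMonoidAlgebra.mapDomainRingHom R (AddMonoidHom.mulLeft k)

lemma dil_single {R : Type*} [Field R] (k i : ZMod 7) (r : R) :
    dil R k (AddMonoidAlgebra.single i r) = AddMonoidAlgebra.single (k * i) r := by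
  simp [dil]

lemma dil_dil {R : Type*} [Field R] (k l : ZMod 7) (x : AddMonoidAlgebra R (ZMod 7)) :
    dil R k (dil R l x) = dil R (k * l) x := by
  induction x using AddMonoidAlgebra.induction_linear with
  | zero => simp
  | add x y hx hy => simp [hx, hy]
  | single i r => simp only [dil_single, mul_assoc]

lemma dil_map {R S : Type*} [Field R] [Field S] (f : R →+* S) (k : ZMod 7)
    (x : AddMonoidAlgebra R (ZMod 7)) :
    dil S k (AddMonoidAlgebra.mapRingHom (ZMod 7) f x) =
      AddMonoidAlgebra.mapRingHom (ZMod 7) f (dil R k x) := by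
  induction x using AddMonoidAlgebra.induction_linear with
  | zero => simp
  | add x y hx hy => rw [map_add, map_add, hx, hy, map_add, map_add]
  | single i r => simp only [dil_single, AddMonoidAlgebra.mapRingHom_single]

/-- The generic element of the group algebra. -/
def gen7 {F : Type*} [Field F] (z : ZMod 7 → F) : AddMonoidAlgebra F (ZMod 7) :=
  ∑ i, AddMonoidAlgebra.single i (z i)

lemma count7 : ∀ d e : ZMod 7, (Finset.univ.filter fun k : ZMod 7 => d = k * e).card =
    if e = 0 then (if d = 0 then 7 else 0) else 1 := by decide

lemma coeff_gen7_mul {F : Type*} [Field F] (z : ZMod 7 → F) (k m : ZMod 7) :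
    (gen7 z * dil F k (gen7 z)).coeff m = ∑ i, ∑ j, if i + k * j = m then z i * z j else 0 := by
  simp only [gen7, map_sum, dil_single, Finset.sum_mul_sum, AddMonoidAlgebra.single_mul_single,
    AddMonoidAlgebra.coeff_sum, Finsupp.coe_finsetSum, Finset.sum_apply,
    AddMonoidAlgebra.coeff_single, Finsupp.single_apply]

lemma comb7 {F : Type*} [Field F] (z : ZMod 7 → F) (a b : ZMod 7) :
    7 * (z a * z b) = ∑ k, (gen7 z * dil F k (gen7 z)).coeff (a + k * b) +
      (∑ i, z i) * z b - (∑ i, z i) * (∑ i, z i) := by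
  have h : ∑ k, (gen7 z * dil F k (gen7 z)).coeff (a + k * b) =
      ∑ i, ∑ j, (if j = b then (if i = a then 7 else 0) else 1) * (z i * z j) := by
    simp only [coeff_gen7_mul]
    rw [Finset.sum_comm]
    refine Finset.sum_congr rfl fun i _ => ?_
    rw [Finset.sum_comm]
    refine Finset.sum_congr rfl fun j _ => ?_
    rw [← Finset.sum_filter, Finset.sum_const]
    have e : (Finset.univ.filter fun k : ZMod 7 => i + k * j = a + k * b) =
        Finset.univ.filter fun k : ZMod 7 => (i - a) = k * (b - j) := by
      ext k
      simp only [Finset.mem_filter, Finset.mem_univ, true_and]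
      constructor <;> intro h <;> linear_combination h
    rw [e, count7, nsmul_eq_mul]
    simp only [sub_eq_zero, eq_comm (a := b)]
    split_ifs <;> simp
  rw [h]
  have h2 : ∀ i j, (if j = b then (if i = a then (7 : F) else 0) else 1) * (z i * z j) =
      z i * z j - (if j = b then z i * z j else 0) + if j = b then (if i = a then 7 * (z i * z j) else 0) else 0 := by
    intro i j; split_ifs <;> ring
  simp only [h2, Finset.sum_add_distrib, Finset.sum_sub_distrib, Finset.sum_ite_eq',
    Finset.mem_univ, if_true, ← Finset.mul_sum, ← Finset.sum_mul]
  ring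

lemma mon7_1 {R : Type*} [CommRing R] {a1 a2 a3 a4 a6 b1 b2 b3 b4 b6 t3 t4 t6 y : R} (hb1 : a1 * b1 = 1) (_hb2 : a2 * b2 = 1) (hb3 : a3 * b3 = 1) (hb4 : a4 * b4 = 1) (hb6 : a6 * b6 = 1) (ht3 : t3 = a3 * a1 * b4) (ht4 : t4 = a4 * a6 * b3) (ht6 : t6 = a6 * a2 * b1) (hy6 : y * t6 = 1) :
    a1 * a1 = y * t3 * t4 * a2 := by
  grind

lemma mon7_2 {R : Type*} [CommRing R] {a1 a2 a3 a4 a5 a6 b2 b3 b6 t1 t4 t5 y : R} (hb2 : a2 * b2 = 1) (hb3 : a3 * b3 = 1) (hb6 : a6 * b6 = 1) (ht1 : t1 = a1 * a5 * b6) (ht4 : t4 = a4 * a6 * b3) (ht5 : t5 = a5 * a4 * b2) (hy5 : y * t5 = 1) :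
    a1 * a2 = y * t1 * t4 * a3 := by
  grind

lemma mon7_3 {R : Type*} [CommRing R] {a1 a3 a4 b4 t3 : R} (hb4 : a4 * b4 = 1) (ht3 : t3 = a3 * a1 * b4) :
    a1 * a3 = t3 * a4 := by
  grind

lemma mon7_4 {R : Type*} [CommRing R] {a1 a2 a3 a4 a5 a6 b1 b3 b5 t2 t4 t6 y : R} (hb1 : a1 * b1 = 1) (hb3 : a3 * b3 = 1) (hb5 : a5 * b5 = 1) (ht2 : t2 = a2 * a3 * b5) (ht4 : t4 = a4 * a6 * b3) (ht6 : t6 = a6 * a2 * b1) (hy6 : y * t6 = 1) :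
    a1 * a4 = y * t4 * t2 * a5 := by
  grind

lemma mon7_5 {R : Type*} [CommRing R] {a1 a5 a6 b6 t1 : R} (hb6 : a6 * b6 = 1) (ht1 : t1 = a1 * a5 * b6) :
    a1 * a5 = t1 * a6 := by
  grind

lemma mon7_6 {R : Type*} [CommRing R] {a1 a3 a4 a6 b3 b4 t3 t4 : R} (hb3 : a3 * b3 = 1) (hb4 : a4 * b4 = 1) (ht3 : t3 = a3 * a1 * b4) (ht4 : t4 = a4 * a6 * b3) :
    a1 * a6 = t3 * t4 * 1 := by
  grind

lemma step2_other (K F : Type*) [Field K] [Field F] [Algebra K F] (z : ZMod 7 → F)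
    (h7 : (7 : F) ≠ 0) (β : AddMonoidAlgebra F (ZMod 7)) (hβ : gen7 z * β = 1) : Step2 K F z := by
  set α := gen7 z with hα
  have hab : ∀ k, dil F k α * dil F k β = 1 := fun k => by rw [← map_mul, hβ, map_one]
  set τ := α * dil F 5 α * dil F 6 β with hτ
  have hinv : ∀ (f : F →ₐ[K] F) (e : ZMod 7), (∀ i, f (z i) = z (i + e)) →
      ∀ i, f (τ.coeff i) = τ.coeff i := by
    intro f e hf i
    set φ := AddMonoidAlgebra.mapRingHom (ZMod 7) (f : F →+* F) with hφ
    have h1 : φ α = AddMonoidAlgebra.single (-e) 1 * α := by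
      rw [hα, gen7, map_sum, Finset.mul_sum,
        ← Equiv.sum_comp (Equiv.addRight e) (fun i => AddMonoidAlgebra.single (-e) 1 * AddMonoidAlgebra.single i (z i))]
      refine Finset.sum_congr rfl fun i _ => ?_
      rw [hφ, AddMonoidAlgebra.mapRingHom_single, AddMonoidAlgebra.single_mul_single]
      simp [hf]
    have hss : ∀ u v : ZMod 7, u + v = 0 → (AddMonoidAlgebra.single u 1 * AddMonoidAlgebra.single v 1 :
        AddMonoidAlgebra F (ZMod 7)) = 1 := by
      intro u v h
      rw [AddMonoidAlgebra.single_mul_single, h, one_mul]; rfl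
    have h2 : φ β = AddMonoidAlgebra.single e 1 * β := by
      have h3 : φ α * φ β = 1 := by rw [← map_mul, hβ, map_one]
      rw [h1] at h3
      have h4 := hss e (-e) (by ring)
      calc φ β = (AddMonoidAlgebra.single e 1 * AddMonoidAlgebra.single (-e) 1) * (α * β) * φ β := by
            rw [h4, hβ]; ring
        _ = AddMonoidAlgebra.single e 1 * β * (AddMonoidAlgebra.single (-e) 1 * α * φ β) := by ring
        _ = _ := by rw [h3, mul_one]
    have h5 : φ τ = τ := by
      rw [hτ, map_mul, map_mul, hφ, ← dil_map, ← dil_map, ← hφ, h1, h2, map_mul, map_mul,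
        dil_single, dil_single]
      have h6 : (AddMonoidAlgebra.single (-e) 1 * AddMonoidAlgebra.single (5 * -e) 1 *
          AddMonoidAlgebra.single (6 * e) 1 : AddMonoidAlgebra F (ZMod 7)) = 1 := by
        rw [AddMonoidAlgebra.single_mul_single, mul_one]
        exact hss _ _ (by ring)
      linear_combination (α * dil F 5 α * dil F 6 β) * h6
    calc f (τ.coeff i) = (φ τ).coeff i := by rw [hφ, AddMonoidAlgebra.coeff_mapRingHom]; rfl
      _ = _ := by rw [h5]
  refine ⟨fun i => τ.coeff i, fun f hf => hinv f 1 hf, fun f hf => hinv f 0 (by simpa using hf), ?_⟩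
  intro E hE
  set ι := AddMonoidAlgebra.mapRingHom (ZMod 7) (algebraMap E F) with hι
  have hιinj : Function.Injective ι :=
    AddMonoidAlgebra.map_injective ((algebraMap E F : E →+* F) : E →+ F) (algebraMap E F).injective
  -- the elements `T k`
  obtain ⟨τ', hτ'⟩ : ∃ τ', ι τ' = τ := by
    refine ⟨∑ i, AddMonoidAlgebra.single i (⟨_, hE i⟩ : E), ?_⟩
    rw [map_sum]
    simp only [hι, AddMonoidAlgebra.mapRingHom_single]
    ext j
    simp
  have hT : ∀ k, dil F k τ = ι (dil E k τ') := fun k => by rw [← hτ', hι, dil_map]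
  have hT2 : ∀ k, dil F k τ = dil F k α * dil F (k * 5) α * dil F (k * 6) β := fun k => by
    rw [hτ, map_mul, map_mul, dil_dil, dil_dil]
  have hTu : ∀ k, ∃ y, ι y * dil F k τ = 1 := by
    intro k
    have hfin : Module.Finite E (AddMonoidAlgebra E (ZMod 7)) :=
      Module.Finite.equiv (AddMonoidAlgebra.coeffLinearEquiv E).symm
    have hart : IsArtinianRing (AddMonoidAlgebra E (ZMod 7)) := IsArtinianRing.of_finite E _
    have hF : IsUnit (dil F k τ) := by
      rw [hT2]
      exact (((IsUnit.of_mul_eq_one _ (hab _)).mul (IsUnit.of_mul_eq_one _ (hab _))).mul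
        (IsUnit.of_mul_eq_one _ ((mul_comm _ _).trans (hab _))))
    have hu : IsUnit (dil E k τ') := by
      refine IsArtinianRing.isUnit_of_mem_nonZeroDivisors ?_
      rw [mem_nonZeroDivisors_iff_right]
      intro x hx
      apply hιinj
      have h := congrArg ι hx
      rw [map_mul, ← hT, map_zero] at h
      rw [map_zero]
      exact (hF.mul_left_eq_zero).1 h
    obtain ⟨u, hu⟩ := hu
    refine ⟨(↑u⁻¹ : AddMonoidAlgebra E (ZMod 7)), ?_⟩
    rw [hT, ← map_mul, ← hu, Units.inv_mul, map_one]
  choose y hy using hTu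
  -- the span of the `z i`
  set W : Submodule E F := Submodule.span E (Set.range z) with hW
  have hzW : ∀ i, z i ∈ W := fun i => Submodule.subset_span ⟨i, rfl⟩
  have hmulW : ∀ (u : AddMonoidAlgebra E (ZMod 7)) (x : AddMonoidAlgebra F (ZMod 7)),
      (∀ i, x.coeff i ∈ W) → ∀ i, (ι u * x).coeff i ∈ W := by
    intro u x hx
    induction u using AddMonoidAlgebra.induction_linear with
    | zero => intro i; simp
    | add u v hu hv =>
      intro i
      rw [map_add, add_mul, AddMonoidAlgebra.coeff_add]
      exact W.add_mem (hu i) (hv i)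
    | single j r =>
      intro i
      rw [hι, AddMonoidAlgebra.mapRingHom_single, AddMonoidAlgebra.coeff_single_mul_apply]
      exact W.smul_mem r (hx _)
  have haW : ∀ k i, (dil F k α).coeff i ∈ W := by
    intro k i
    rw [hα, gen7, map_sum]
    simp only [dil_single, AddMonoidAlgebra.coeff_sum, Finsupp.coe_finsetSum, Finset.sum_apply,
      AddMonoidAlgebra.coeff_single, Finsupp.single_apply]
    refine W.sum_mem fun j _ => ?_
    split_ifs
    · exact hzW j
    · exact W.zero_mem
  set S := ∑ i, z i with hS
  have ha0 : dil F 0 α = AddMonoidAlgebra.single 0 S := by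
    rw [hα, gen7, map_sum]
    simp only [dil_single, zero_mul]
    exact (map_sum (AddMonoidAlgebra.singleAddHom (0 : ZMod 7)) z Finset.univ).symm
  have hT0 : dil F 0 τ = dil F 0 α := by
    rw [hT2, zero_mul, zero_mul, mul_assoc, hab, mul_one]
  have hS0 : S ≠ 0 := by
    intro h
    have h1 := hab 0
    rw [ha0, h, AddMonoidAlgebra.single_zero, zero_mul] at h1
    exact zero_ne_one h1
  have hSE : S ∈ E := by
    have h1 : S = (dil F 0 τ).coeff 0 := by rw [hT0, ha0]; simp
    rw [h1, hT, hι, AddMonoidAlgebra.coeff_mapRingHom]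
    exact SetLike.coe_mem _
  have hsmul : ∀ e ∈ E, ∀ w ∈ W, e * w ∈ W := fun e he w hw => W.smul_mem (⟨e, he⟩ : E) hw
  have h1W : (1 : F) ∈ W := by
    have := hsmul S⁻¹ (E.inv_mem hSE) S (W.sum_mem fun i _ => hzW i)
    rwa [inv_mul_cancel₀ hS0] at this
  have h1A : ∀ i, (1 : AddMonoidAlgebra F (ZMod 7)).coeff i ∈ W := by
    intro i
    rw [AddMonoidAlgebra.one_def, AddMonoidAlgebra.coeff_single, Finsupp.single_apply]
    split_ifs
    · exact h1W
    · exact W.zero_mem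
  have hα1 : dil F 1 α = α := by
    rw [hα, gen7, map_sum]
    simp only [dil_single, one_mul]
  have hb1 := hab 1
  have hb2 := hab 2
  have hb3 := hab 3
  have hb4 := hab 4
  have hb5 := hab 5
  have hb6 := hab 6
  have t1 : dil F 1 τ = dil F 1 α * dil F 5 α * dil F 6 β := hT2 1
  have t2 : dil F 2 τ = dil F 2 α * dil F 3 α * dil F 5 β := hT2 2
  have t3 : dil F 3 τ = dil F 3 α * dil F 1 α * dil F 4 β := hT2 3
  have t4 : dil F 4 τ = dil F 4 α * dil F 6 α * dil F 3 β := hT2 4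
  have t5 : dil F 5 τ = dil F 5 α * dil F 4 α * dil F 2 β := hT2 5
  have t6 : dil F 6 τ = dil F 6 α * dil F 2 α * dil F 1 β := hT2 6
  have hy5 := hy 5
  have hy6 := hy 6
  have key : ∀ k i, (α * dil F k α).coeff i ∈ W := by
    have c1 : dil F 1 α * dil F 1 α = ι (y 6 * dil E 3 τ' * dil E 4 τ') * dil F 2 α := by
      rw [map_mul, map_mul, ← hT, ← hT]
      exact mon7_1 hb1 hb2 hb3 hb4 hb6 t3 t4 t6 hy6
    have c2 : dil F 1 α * dil F 2 α = ι (y 5 * dil E 1 τ' * dil E 4 τ') * dil F 3 α := by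
      rw [map_mul, map_mul, ← hT, ← hT]
      exact mon7_2 hb2 hb3 hb6 t1 t4 t5 hy5
    have c3 : dil F 1 α * dil F 3 α = ι (dil E 3 τ') * dil F 4 α := by
      rw [← hT]
      exact mon7_3 hb4 t3
    have c4 : dil F 1 α * dil F 4 α = ι (y 6 * dil E 4 τ' * dil E 2 τ') * dil F 5 α := by
      rw [map_mul, map_mul, ← hT, ← hT]
      exact mon7_4 hb1 hb3 hb5 t2 t4 t6 hy6
    have c5 : dil F 1 α * dil F 5 α = ι (dil E 1 τ') * dil F 6 α := by
      rw [← hT]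
      exact mon7_5 hb6 t1
    have c6 : dil F 1 α * dil F 6 α = ι (dil E 3 τ' * dil E 4 τ') * 1 := by
      rw [map_mul, ← hT, ← hT]
      exact mon7_6 hb3 hb4 t3 t4
    have c0 : dil F 1 α * dil F 0 α = ι (dil E 0 τ') * dil F 1 α := by
      rw [← hT, hT0, mul_comm]
    intro k i
    rw [← hα1, dil_dil, mul_one]
    have hk : k = 0 ∨ k = 1 ∨ k = 2 ∨ k = 3 ∨ k = 4 ∨ k = 5 ∨ k = 6 := by
      revert k; decide
    rcases hk with rfl | rfl | rfl | rfl | rfl | rfl | rfl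
    · rw [c0]; exact hmulW _ _ (haW _) _
    · rw [c1]; exact hmulW _ _ (haW _) _
    · rw [c2]; exact hmulW _ _ (haW _) _
    · rw [c3]; exact hmulW _ _ (haW _) _
    · rw [c4]; exact hmulW _ _ (haW _) _
    · rw [c5]; exact hmulW _ _ (haW _) _
    · rw [c6]; exact hmulW _ _ h1A _
  have h7E : (7 : F)⁻¹ ∈ E := E.inv_mem (ofNat_mem E 7)
  have hzz : ∀ a b, z a * z b ∈ W := by
    intro a b
    have h := comb7 z a b
    rw [← hS, ← hα] at h
    have h2 : 7 * (z a * z b) ∈ W := by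
      rw [h]
      refine W.sub_mem (W.add_mem (W.sum_mem fun k _ => key k _) (hsmul _ hSE _ (hzW b))) ?_
      exact hsmul _ hSE _ (W.sum_mem fun i _ => hzW i)
    have h3 := hsmul _ h7E _ h2
    rwa [← mul_assoc, inv_mul_cancel₀ h7, one_mul] at h3
  have hWW : ∀ u v, u ∈ W → v ∈ W → u * v ∈ W := by
    have hle : W * W ≤ W := by
      rw [hW, Submodule.span_mul_span, Submodule.span_le]
      rintro _ ⟨_, ⟨a, rfl⟩, _, ⟨b, rfl⟩, rfl⟩
      exact hzz a b
    exact fun u v hu hv => hle (Submodule.mul_mem_mul hu hv)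
  have hWf : Module.Finite E W := FiniteDimensional.span_of_finite E (Set.finite_range z)
  have hWd : Module.finrank E W ≤ 7 := finrank_range_le_card z
  let A : Subalgebra E F := W.toSubalgebra h1W hWW
  have hAf : Module.Finite E A := hWf
  have hAd : Module.finrank E A ≤ 7 := hWd
  have hfield : IsField A := by
    have : Algebra.IsIntegral E A := inferInstance
    exact isField_of_isIntegral_of_isField' (Field.toIsField E)
  let M : IntermediateField E F := A.toIntermediateField' hfield
  have hMf : Module.Finite E M := hAf
  have hMd : Module.finrank E M ≤ 7 := hAd
  have hle : IntermediateField.adjoin E (Set.range z) ≤ M := by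
    rw [IntermediateField.adjoin_le_iff]
    rintro _ ⟨j, rfl⟩
    exact hzW j
  refine ⟨?_, (IntermediateField.finrank_le_of_le_right hle).trans hMd⟩
  exact Module.Finite.of_injective (IntermediateField.inclusion hle).toLinearMap
    (IntermediateField.inclusion_injective hle)

/-! ### Assembly -/

lemma gen7_unit (K F : Type*) [Field K] [Field F] [Algebra K F] (z : ZMod 7 → F)
    (hz : AlgebraicIndependent K z) : ∃ β, gen7 z * β = 1 := by
  have hdet : (Matrix.circulant z).det ≠ 0 := by
    intro h
    set P : MvPolynomial (ZMod 7) K := (Matrix.circulant (MvPolynomial.X : ZMod 7 → _)).det with hP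
    have h1 : MvPolynomial.aeval z P = 0 := by
      rw [← h, hP, AlgHom.map_det]
      congr 1
      ext i j
      simp [Matrix.circulant]
    have h2 : P = 0 := algebraicIndependent_iff.1 hz _ h1
    have h3 : MvPolynomial.aeval (Pi.single 0 1 : ZMod 7 → K) P = 1 := by
      rw [hP, AlgHom.map_det, ← Matrix.det_one (n := ZMod 7)]
      congr 1
      ext i j
      simp [Matrix.circulant, Pi.single_apply, Matrix.one_apply, sub_eq_zero]
    rw [h2, map_zero] at h3
    exact zero_ne_one h3
  set w := (Matrix.circulant z)⁻¹.mulVec (Pi.single 0 1) with hw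
  have hmw : (Matrix.circulant z).mulVec w = Pi.single 0 1 := by
    rw [hw, Matrix.mulVec_mulVec, Matrix.mul_nonsing_inv _ (isUnit_iff_ne_zero.2 hdet), Matrix.one_mulVec]
  refine ⟨gen7 w, ?_⟩
  ext m
  have := congrFun hmw m
  simp only [gen7, Finset.sum_mul_sum, AddMonoidAlgebra.single_mul_single,
    AddMonoidAlgebra.coeff_sum, Finsupp.coe_finsetSum, Finset.sum_apply,
    AddMonoidAlgebra.coeff_single, Finsupp.single_apply, AddMonoidAlgebra.one_def]
  rw [Finset.sum_comm]
  simp only [Matrix.mulVec, dotProduct, Matrix.circulant_apply, Pi.single_apply] at this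
  simp only [eq_comm (a := (0 : ZMod 7))]
  rw [← this]
  refine Finset.sum_congr rfl fun j _ => ?_
  simp only [← eq_sub_iff_add_eq]
  simp

lemma sum7_ne (K F : Type*) [Field K] [Field F] [Algebra K F] (z : ZMod 7 → F)
    (hz : AlgebraicIndependent K z) : ∑ i, z i ≠ 0 := by
  intro h
  set P : MvPolynomial (ZMod 7) K := ∑ i, MvPolynomial.X i with hP
  have h1 : MvPolynomial.aeval z P = 0 := by
    rw [← h, hP]; simp
  have h2 : P = 0 := algebraicIndependent_iff.1 hz _ h1
  have h3 : MvPolynomial.aeval (Pi.single 0 1 : ZMod 7 → K) P = 1 := by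
    rw [hP]; simp
  rw [h2, map_zero] at h3
  exact zero_ne_one h3

lemma step2_all (K F : Type*) [Field K] [Field F] [Algebra K F] (z : ZMod 7 → F)
    (hz : AlgebraicIndependent K z) : Step2 K F z := by
  by_cases h7 : (7 : F) = 0
  · exact step2_seven K F z h7 (sum7_ne K F z hz)
  · obtain ⟨β, hβ⟩ := gen7_unit K F z hz
    exact step2_other K F z h7 β hβ

/-- The labelling of the seven nonzero points. -/
def lab : ZMod 7 → Fin 8 := ![1, 2, 6, 3, 4, 5, 7]

lemma lab_ne : ∀ i, lab i ≠ 0 := by decide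

lemma lab_surj : ∀ j : Fin 8, j = 0 ∨ ∃ i, lab i = j := by decide

lemma Xvar_ne (K : Type) [Field K] (P : MvPolynomial (Fin 8) K)
    (h : MvPolynomial.aeval (Pi.single 0 1 : Fin 8 → K) P = 1) :
    MvPolynomial.aeval (Xvar K (Fin 8)) P ≠ 0 := by
  intro h1
  rw [algebraicIndependent_iff.1 (algInd_Xvar K (Fin 8)) _ h1, map_zero] at h
  exact zero_ne_one h

lemma step1_all (K : Type) [Field K] :
    Step1 K (RFF K (Fin 8)) (Xvar K (Fin 8) 0) (fun i => Xvar K (Fin 8) (lab i)) := by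
  have hgen : ∀ M : IntermediateField K (RFF K (Fin 8)), Xvar K (Fin 8) 0 ∈ M →
      (∀ i, Xvar K (Fin 8) (lab i) ∈ M) → M = ⊤ := by
    intro M h0 h1
    refine adjoin_Xvar K (Fin 8) M fun j => ?_
    rcases lab_surj j with rfl | ⟨i, rfl⟩
    · exact h0
    · exact h1 i
  by_cases h2 : (2 : RFF K (Fin 8)) = 0
  · refine step1_two K _ _ _ h2 hgen ?_
    have := Xvar_ne K (MvPolynomial.X 0 + ∑ i, MvPolynomial.X (lab i)) (by
      simp [Pi.single_apply, lab_ne])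
    simpa using this
  · refine step1_odd K _ _ _ h2 hgen fun i => ?_
    have := Xvar_ne K (MvPolynomial.X 0 + MvPolynomial.X (lab (i + 1)) + MvPolynomial.X (lab (i + 2)) +
      MvPolynomial.X (lab (i + 4)) - MvPolynomial.X (lab i) - MvPolynomial.X (lab (i + 3)) -
      MvPolynomial.X (lab (i + 5)) - MvPolynomial.X (lab (i + 6))) (by
      simp [Pi.single_apply, lab_ne])
    simpa only [map_add, map_sub, MvPolynomial.aeval_X, yfun] using this

/-- The four generators. -/
def g1 : Equiv.Perm (Fin 8) :=
  Equiv.swap (0 : Fin 8) 1 * Equiv.swap 2 3 * Equiv.swap 4 5 * Equiv.swap 6 7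
/-- Second generator. -/
def g2 : Equiv.Perm (Fin 8) :=
  Equiv.swap (0 : Fin 8) 2 * Equiv.swap 1 3 * Equiv.swap 4 6 * Equiv.swap 5 7
/-- Third generator. -/
def g3 : Equiv.Perm (Fin 8) :=
  Equiv.swap (0 : Fin 8) 4 * Equiv.swap 1 5 * Equiv.swap 2 6 * Equiv.swap 3 7
/-- Fourth generator. -/
def g4 : Equiv.Perm (Fin 8) :=
  Equiv.swap (1 : Fin 8) 2 * Equiv.swap 2 6 * Equiv.swap 6 3 * Equiv.swap 3 4 * Equiv.swap 4 5 *
    Equiv.swap 5 7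

lemma g_th : g4 0 = 0 ∧ ∀ i, g4 (lab i) = lab (i + 1) := by decide

lemma g_tr (g : Equiv.Perm (Fin 8)) (j : ZMod 7) (h : (g, j) = (g1, 0) ∨ (g, j) = (g2, 1) ∨ (g, j) = (g3, 4)) :
    g 0 = lab j ∧ g (lab j) = 0 ∧ g (lab (j + 1)) = lab (j + 3) ∧ g (lab (j + 3)) = lab (j + 1) ∧
    g (lab (j + 4)) = lab (j + 5) ∧ g (lab (j + 5)) = lab (j + 4) ∧ g (lab (j + 2)) = lab (j + 6) ∧
    g (lab (j + 6)) = lab (j + 2) := by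
  rcases h with h | h | h <;> obtain ⟨rfl, rfl⟩ := Prod.mk.inj h <;> decide

lemma card_closure : 56 ≤ Nat.card (Subgroup.closure ({g1, g2, g3, g4} : Set (Equiv.Perm (Fin 8)))) := by
  set H := Subgroup.closure ({g1, g2, g3, g4} : Set (Equiv.Perm (Fin 8))) with hH
  have m1 : g1 ∈ H := Subgroup.subset_closure (by simp)
  have m2 : g2 ∈ H := Subgroup.subset_closure (by simp)
  have m3 : g3 ∈ H := Subgroup.subset_closure (by simp)
  have m4 : g4 ∈ H := Subgroup.subset_closure (by simp)
  let φ : (Fin 2 × Fin 2 × Fin 2) × Fin 7 → H := fun q =>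
    ⟨g1 ^ (q.1.1 : ℕ) * g2 ^ (q.1.2.1 : ℕ) * g3 ^ (q.1.2.2 : ℕ) * g4 ^ (q.2 : ℕ),
      H.mul_mem (H.mul_mem (H.mul_mem (H.pow_mem m1 _) (H.pow_mem m2 _)) (H.pow_mem m3 _)) (H.pow_mem m4 _)⟩
  have hφ : Function.Injective φ := by
    -- recover `q.1` from the image of `0`, then `q.2` from the image of `1`
    have e0 : ∀ k : Fin 7, (g4 ^ (k : ℕ)) 0 = 0 := by decide
    have e1 : ∀ k l : Fin 7, (g4 ^ (k : ℕ)) 1 = (g4 ^ (l : ℕ)) 1 → k = l := by decide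
    have e2 : ∀ a b : Fin 2 × Fin 2 × Fin 2,
        (g1 ^ (a.1 : ℕ) * g2 ^ (a.2.1 : ℕ) * g3 ^ (a.2.2 : ℕ)) 0 =
        (g1 ^ (b.1 : ℕ) * g2 ^ (b.2.1 : ℕ) * g3 ^ (b.2.2 : ℕ)) 0 → a = b := by decide
    rintro ⟨a, k⟩ ⟨b, l⟩ h
    have h' := congrArg Subtype.val h
    simp only [φ] at h'
    have hab : a = b := by
      apply e2
      have := Equiv.congr_fun h' 0
      rw [Equiv.Perm.mul_apply, e0, Equiv.Perm.mul_apply _ (g4 ^ (l : ℕ)), e0] at this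
      exact this
    subst hab
    have := mul_left_cancel h'
    rw [e1 k l (by rw [this])]
  have := Nat.card_le_card_of_injective φ hφ
  simpa using this

set_option maxHeartbeats 1600000 in
set_option synthInstance.maxHeartbeats 400000 in
lemma tower_bound {K F : Type*} [Field K] [Field F] [Algebra K F] (E : IntermediateField K F)
    (s : F) (z : ZMod 7 → F) (hsE : s ∈ E)
    (h1 : FiniteDimensional E (IntermediateField.adjoin E (Set.range z)) ∧
      Module.finrank E (IntermediateField.adjoin E (Set.range z)) ≤ 7)
    (hfin : ∀ E : IntermediateField K F, s ∈ E → (∀ i, z i ∈ E) →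
      FiniteDimensional E F ∧ Module.finrank E F ≤ 8) :
    FiniteDimensional E F ∧ Module.finrank E F ≤ 56 := by
  obtain ⟨f1, d1⟩ := h1
  set M := IntermediateField.adjoin E (Set.range z) with hM
  obtain ⟨f2, d2⟩ := hfin (M.restrictScalars K) (M.algebraMap_mem ⟨s, hsE⟩)
    (fun i => IntermediateField.subset_adjoin _ _ ⟨i, rfl⟩)
  have f2' : FiniteDimensional M F := f2
  have d2' : Module.finrank M F ≤ 8 := d2
  refine ⟨Module.Finite.trans M _, ?_⟩
  rw [← Module.finrank_mul_finrank E M F]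
  exact Nat.mul_le_mul d1 d2'

set_option maxHeartbeats 1600000 in
lemma rat_main (K : Type) [Field K] : IsRatExt K ↥(fixedSub K (Fin 8) (Subgroup.closure
    ({g1, g2, g3, g4} : Set (Equiv.Perm (Fin 8))))) := by
  obtain ⟨s, z, hth, htr, hfin⟩ := step1_all K
  have hz : AlgebraicIndependent K z := by
    let t : Option (ZMod 7) → RFF K (Fin 8) := fun o => o.elim s z
    have h : AlgebraicIndependent K t := by
      refine algInd_of_finite K _ (by simp) t ?_
      refine (hfin _ ?_ fun i => ?_).1
      · exact IntermediateField.subset_adjoin _ _ ⟨none, rfl⟩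
      · exact IntermediateField.subset_adjoin _ _ ⟨some i, rfl⟩
    exact h.comp some (Option.some_injective _)
  obtain ⟨t, ht1, ht2, ht3⟩ := step2_all K _ z hz
  let t8 : Fin 8 → RFF K (Fin 8) := Fin.cons s (fun i : Fin 7 => t i)
  set E := IntermediateField.adjoin K (Set.range t8) with hE
  have hsE : s ∈ E := IntermediateField.subset_adjoin _ _ ⟨0, rfl⟩
  have htE : ∀ i : ZMod 7, t i ∈ E := fun i =>
    IntermediateField.subset_adjoin _ _ ⟨Fin.succ (i : Fin 7), rfl⟩
  obtain ⟨hf, hd⟩ := tower_bound E s z hsE (ht3 E htE) hfin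
  refine isRat_of_le K _ card_closure t8 ?_ hf hd
  have fix8 : ∀ f : RFF K (Fin 8) →ₐ[K] RFF K (Fin 8), f s = s → (∀ i, f (t i) = t i) →
      ∀ i, f (t8 i) = t8 i := by
    intro f h0 h1 i
    refine Fin.cases h0 (fun j => ?_) i
    exact h1 j
  have px : ∀ (g : Equiv.Perm (Fin 8)) (a b : Fin 8), g a = b →
      (permHom K (Fin 8) g : RFF K (Fin 8) →ₐ[K] RFF K (Fin 8)) (Xvar K (Fin 8) a) =
        Xvar K (Fin 8) b := by
    rintro g a b rfl
    exact permHom_Xvar K (Fin 8) g a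
  have tr : ∀ g j, ((g, j) = (g1, 0) ∨ (g, j) = (g2, 1) ∨ (g, j) = (g3, (4 : ZMod 7))) →
      ∀ i, permHom K (Fin 8) g (t8 i) = t8 i := by
    intro g j h
    obtain ⟨a0, a1, a2, a3, a4, a5, a6, a7⟩ := g_tr g j h
    have := htr j (permHom K (Fin 8) g : RFF K (Fin 8) →ₐ[K] RFF K (Fin 8)) 
      ⟨px _ _ _ a0, px _ _ _ a1, px _ _ _ a2, px _ _ _ a3, px _ _ _ a4, px _ _ _ a5, px _ _ _ a6,
        px _ _ _ a7⟩
    exact fix8 _ this.1 (ht2 _ this.2)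
  rintro g (rfl | rfl | rfl | rfl)
  · exact tr g1 0 (Or.inl rfl)
  · exact tr g2 1 (Or.inr (Or.inl rfl))
  · exact tr g3 4 (Or.inr (Or.inr rfl))
  · have := hth (permHom K (Fin 8) g4 : RFF K (Fin 8) →ₐ[K] RFF K (Fin 8)) 
      ⟨px _ _ _ g_th.1, fun i => px _ _ _ (g_th.2 i)⟩
    exact fix8 _ this.1 (ht1 _ this.2)

/-- **Rationality for `G₂₅`.** For any field `K`, the subgroup `G₂₅ ⊆ S₈` of order 56 generated by `σ₁`, `σ₂`, `κ` and `θ = (2,3,7,4,5,6,8)` has `K`-rational fixed field. -/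
theorem rationality_G25 (K : Type) [Field K] :
    IsRatExt K ↥(fixedSub K (Fin 8) (Subgroup.closure
      {Equiv.swap (0 : Fin 8) 1 * Equiv.swap 2 3 * Equiv.swap 4 5 * Equiv.swap 6 7,
       Equiv.swap (0 : Fin 8) 2 * Equiv.swap 1 3 * Equiv.swap 4 6 * Equiv.swap 5 7,
       Equiv.swap (0 : Fin 8) 4 * Equiv.swap 1 5 * Equiv.swap 2 6 * Equiv.swap 3 7,
       Equiv.swap (1 : Fin 8) 2 * Equiv.swap 2 6 * Equiv.swap 6 3 * Equiv.swap 3 4 * Equiv.swap 4 5 * Equiv.swap 5 7})) := by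
  exact rat_main K
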